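/- For every real u with 0.841 < u < 1, the square-network quantum distribution P_Q^□ is nonlocal on the network with bipartite sources S₁ (connecting A₁,A₂) and S₂ (connecting A₂,A₃) and a tripartite source S₃ (connecting A₁, A₃, A₄): there do not exist types Λ₁, Λ₂, Λ₃ with probability distributions μ₁, μ₂, μ₃ and response kernels p₁(a₁|λ₁,λ₃), p₂(a₂|λ₁,λ₂), p₃(a₃|λ₂,λ₃), p₄(a₄|λ₃), each output in {0, 1₀, 1₁, 2}, such that P_Q^□(a₁,a₂,a₃,a₄) equals the expectation over independently sampled λ₁, λ₂, λ₃ of the product of these kernels, for all outcomes. -/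

import Mathlib

open MeasureTheory

noncomputable def uco (u : ℝ) : Fin 2 → ℝ := ![u, Real.sqrt (1 - u ^ 2)]
noncomputable def vco (u : ℝ) : Fin 2 → ℝ := ![Real.sqrt (1 - u ^ 2), -u]

inductive Outc where
  | zero : Outc
  | one : Fin 2 → Outc
  | two : Outc
  deriving DecidableEq, Fintype

noncomputable def psiPlus : Fin 2 → Fin 2 → ℝ := fun i j =>
  if i = 0 ∧ j = 1 then (Real.sqrt 2)⁻¹ else if i = 1 ∧ j = 0 then (Real.sqrt 2)⁻¹ else 0

noncomputable def basisVec (u : ℝ) : Outc → Fin 2 → Fin 2 → ℝ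
  | Outc.zero => fun l r => if l = 0 ∧ r = 0 then 1 else 0
  | Outc.one i => fun l r => if l = 0 ∧ r = 1 then uco u i else if l = 1 ∧ r = 0 then vco u i else 0
  | Outc.two => fun l r => if l = 1 ∧ r = 1 then 1 else 0

def finNext {N : ℕ} (k : Fin N) : Fin N := ⟨(k.val + 1) % N, Nat.mod_lt _ k.pos⟩

noncomputable def ringAmp (N : ℕ) (u : ℝ) (a : Fin N → Outc) : ℝ :=
  ∑ L : Fin N → Fin 2, ∑ R : Fin N → Fin 2,
    (∏ k, basisVec u (a k) (L k) (R k)) * ∏ k, psiPlus (R k) (L (finNext k))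

noncomputable def ringP (N : ℕ) (u : ℝ) (a : Fin N → Outc) : ℝ := ringAmp N u a ^ 2

/-!
Each source `ψ⁺` sends exactly one token (qubit value `1`) to one of its two neighbours, and an
outcome reveals how many tokens its party received. In a local model the supports of the responses
rigidly fix these counts, and exchanging hidden variables shows that the tokens travel along
deterministic routes: one token for each bipartite source, two for the tripartite one.

A nonconstant route is determined by the token counts, so it interferes with no other route. Hence
its cell in the space of hidden variables has mass `1 / 16`, and the outcomes there have independent
Born statistics. When all tokens travel in the same direction this argument fails, but redirecting
a single source leaves the distribution of the remaining hidden variables unchanged. This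
transports the statistics of `A₄` alone, and jointly with any one other party, to the cell of a
constant route: `A₄` answers `1₀` with conditional probability `v²`, and `A₄` and a given other
party both answer `1₀` with conditional probability `v⁴`. All parties announce one token on this
cell, so the union bound forces
`v² ≤ 16 P(1₁, 1₁, 1₁, 1₀) + 3 v⁴ = (u v³ - u³ v)² + 3 v⁴`, which is false for `u⁴ > 1 / 2`.
-/

section Routes

variable {N : ℕ} {u : ℝ}

/-- The number of tokens announced by an outcome: the number of ones in each computational basis
vector that occurs in its measurement vector. -/
def Outc.tok : Outc → ℕ
  | .zero => 0
  | .one _ => 1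
  | .two => 2

/-- A route `r` describes one term of the expansion of `(ψ⁺)^{⊗N}`: `r k` is the value of the right
qubit of party `k`. The left qubit of the next party then carries the opposite value, so that
`leftToken r k` is the value of the left qubit of party `k`. -/
def leftToken (r : Fin N → Fin 2) (k : Fin N) : Fin 2 := 1 - r ((finRotate N).symm k)

/-- The number of tokens that party `k` receives along the route `r`, where each source sends a
single token to one of its two neighbours. -/
def tokenCount (r : Fin N → Fin 2) (k : Fin N) : ℕ := (leftToken r k).val + (r k).val

/-- The contribution of the route `r` to the amplitude of the outcomes `a`, without the
normalization `(√2)⁻¹ ^ N` of the sources. -/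
noncomputable def routeAmp (u : ℝ) (a : Fin N → Outc) (r : Fin N → Fin 2) : ℝ :=
  ∏ k, basisVec u (a k) (leftToken r k) (r k)

theorem Outc.sum_univ {M : Type*} [AddCommMonoid M] (f : Outc → M) :
    ∑ o, f o = f .zero + ∑ i, f (.one i) + f .two := by
  have huniv : (Finset.univ : Finset Outc) = {.zero, .one 0, .one 1, .two} := by decide
  simp [huniv, Fin.sum_univ_two, add_assoc]

theorem one_sub_val_fin_two (b : Fin 2) : (1 - b).val = 1 - b.val := by
  decide +revert

theorem exists_tok_eq_tokenCount (r : Fin N → Fin 2) (k : Fin N) :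
    ∃ o : Outc, o.tok = tokenCount r k := by
  have hle : tokenCount r k ≤ 2 := by simp only [tokenCount]; omega
  interval_cases tokenCount r k
  exacts [⟨.zero, rfl⟩, ⟨.one 0, rfl⟩, ⟨.two, rfl⟩]

theorem finNext_eq_finRotate (k : Fin N) : finNext k = finRotate N k := by
  cases N with
  | zero => exact k.elim0
  | succ n => ext; simp [finNext, Fin.val_add]

theorem sum_tokenCount (r : Fin N → Fin 2) : ∑ k, tokenCount r k = N := by
  have hleft : ∑ k, (leftToken r k).val = ∑ k, (1 - r k).val :=
    Equiv.sum_comp (finRotate N).symm fun k => (1 - r k).val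
  have htwo (b : Fin 2) : (1 - b).val + b.val = 1 := by decide +revert
  simp only [tokenCount, Finset.sum_add_distrib, hleft]
  simp [← Finset.sum_add_distrib, htwo]

theorem eq_of_forall_finRotate_eq {α : Type*} {f : Fin N → α} (h : ∀ k, f (finRotate N k) = f k)
    (i j : Fin N) : f i = f j := by
  cases N with
  | zero => exact i.elim0
  | succ n =>
    have hzero (k : Fin (n + 1)) : f k = f 0 := by
      induction k using Fin.induction with
      | zero => rfl
      | succ k ih => rw [← ih, ← h k.castSucc, finRotate_apply, Fin.coeSucc_eq_succ]
    rw [hzero i, hzero j]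

/-- The difference of two routes with the same token counts is invariant under rotation, hence
constant. -/
theorem eq_of_tokenCount_eq {r r' : Fin N → Fin 2} (h : tokenCount r = tokenCount r')
    {i j : Fin N} (hij : r i ≠ r j) : r = r' := by
  have hrot (k : Fin N) : ((r (finRotate N k)).val : ℤ) - (r' (finRotate N k)).val =
      (r k).val - (r' k).val := by
    have hk := congrFun h (finRotate N k)
    simp only [tokenCount, leftToken, Equiv.symm_apply_apply, one_sub_val_fin_two] at hk
    omega
  have hconst := eq_of_forall_finRotate_eq (f := fun k => ((r k).val : ℤ) - (r' k).val) hrot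
  funext k
  have := hconst k i
  have := hconst k j
  omega

theorem basisVec_ne_zero_imp_tok_eq {o : Outc} {l r : Fin 2} (h : basisVec u o l r ≠ 0) :
    o.tok = l.val + r.val := by
  cases o <;> fin_cases l <;> fin_cases r <;> simp_all [basisVec, Outc.tok]

theorem tok_comp_eq_of_routeAmp_ne_zero {a : Fin N → Outc} {r : Fin N → Fin 2}
    (h : routeAmp u a r ≠ 0) : Outc.tok ∘ a = tokenCount r :=
  funext fun k => basisVec_ne_zero_imp_tok_eq (Finset.prod_ne_zero_iff.1 h k (Finset.mem_univ k))

theorem psiPlus_eq_ite (i j : Fin 2) : psiPlus i j = if j = 1 - i then (√2)⁻¹ else 0 := by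
  fin_cases i <;> fin_cases j <;> simp [psiPlus]

theorem prod_psiPlus (L R : Fin N → Fin 2) :
    ∏ k, psiPlus (R k) (L (finNext k)) = if L = leftToken R then (√2)⁻¹ ^ N else 0 := by
  have hL : (∀ k, L (finRotate N k) = 1 - R k) ↔ L = leftToken R := by
    rw [funext_iff, ← (finRotate N).forall_congr_right (q := fun k => L k = leftToken R k)]
    simp only [leftToken, Equiv.symm_apply_apply]
  simp only [psiPlus_eq_ite, finNext_eq_finRotate, Fintype.prod_ite_zero, hL, Finset.prod_const,
    Finset.card_univ, Fintype.card_fin]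

theorem ringAmp_eq_sum_routeAmp (a : Fin N → Outc) :
    ringAmp N u a = (√2)⁻¹ ^ N * ∑ r, routeAmp u a r := by
  rw [ringAmp, Finset.sum_comm, Finset.mul_sum]
  simp [prod_psiPlus, routeAmp, mul_comm]

theorem ringP_eq_sq_sum_routeAmp (a : Fin N → Outc) :
    ringP N u a = (∑ r, routeAmp u a r) ^ 2 / 2 ^ N := by
  rw [ringP, ringAmp_eq_sum_routeAmp, mul_pow, ← pow_mul, mul_comm N 2, pow_mul, inv_pow,
    Real.sq_sqrt zero_le_two, inv_pow, mul_comm, div_eq_mul_inv]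

theorem exists_tok_comp_eq_of_ringP_ne_zero {a : Fin N → Outc} (h : ringP N u a ≠ 0) :
    ∃ r, Outc.tok ∘ a = tokenCount r := by
  have hsum : ∑ r, routeAmp u a r ≠ 0 := fun h0 => h (by simp [ringP_eq_sq_sum_routeAmp, h0])
  obtain ⟨r, -, hr⟩ := Finset.exists_ne_zero_of_sum_ne_zero hsum
  exact ⟨r, tok_comp_eq_of_routeAmp_ne_zero hr⟩

theorem ringP_eq_of_nonconstant {a : Fin N → Outc} {r : Fin N → Fin 2}
    (ha : Outc.tok ∘ a = tokenCount r) {i j : Fin N} (hij : r i ≠ r j) :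
    ringP N u a = (∏ k, basisVec u (a k) (leftToken r k) (r k) ^ 2) / 2 ^ N := by
  have hunique (r' : Fin N → Fin 2) (hne : r' ≠ r) : routeAmp u a r' = 0 := by
    by_contra h0
    exact hne (eq_of_tokenCount_eq (ha.symm.trans (tok_comp_eq_of_routeAmp_ne_zero h0)) hij).symm
  rw [ringP_eq_sq_sum_routeAmp, Fintype.sum_eq_single r hunique, routeAmp, Finset.prod_pow]

theorem eq_zero_or_eq_one_of_tokenCount_eq_one [NeZero N] {r : Fin N → Fin 2}
    (h : ∀ k, tokenCount r k = 1) : r = 0 ∨ r = 1 := by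
  have hrot (k : Fin N) : r (finRotate N k) = r k := by
    have hk := h (finRotate N k)
    simp only [tokenCount, leftToken, Equiv.symm_apply_apply, one_sub_val_fin_two] at hk
    omega
  have hconst := eq_of_forall_finRotate_eq hrot
  obtain h0 | h1 : r 0 = 0 ∨ r 0 = 1 := by omega
  · exact .inl (funext fun k => (hconst k 0).trans h0)
  · exact .inr (funext fun k => (hconst k 0).trans h1)

theorem ringP_one [NeZero N] (i : Fin N → Fin 2) :
    ringP N u (fun k => .one (i k)) = (∏ k, vco u (i k) + ∏ k, uco u (i k)) ^ 2 / 2 ^ N := by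
  have hzero (r : Fin N → Fin 2) (hr : r ≠ 0 ∧ r ≠ 1) :
      routeAmp u (fun k => .one (i k)) r = 0 := by
    by_contra h
    rcases eq_zero_or_eq_one_of_tokenCount_eq_one fun k =>
      (congrFun (tok_comp_eq_of_routeAmp_ne_zero h) k).symm with h | h
    exacts [hr.1 h, hr.2 h]
  rw [ringP_eq_sq_sum_routeAmp, Fintype.sum_eq_add 0 1 (fun h => zero_ne_one (congrFun h 0)) hzero]
  simp [routeAmp, basisVec, leftToken]

theorem ringP_four_one_one_one_zero (hu : u ^ 2 ≤ 1) :
    ringP 4 u (fun k => .one (![1, 1, 1, 0] k)) =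
      u ^ 2 * (1 - u ^ 2) * (1 - 2 * u ^ 2) ^ 2 / 16 := by
  have hv : √(1 - u ^ 2) ^ 2 = 1 - u ^ 2 := Real.sq_sqrt (sub_nonneg.2 hu)
  rw [ringP_one]
  simp only [Fin.prod_univ_four, uco, vco, Matrix.cons_val]
  calc _ = u ^ 2 * √(1 - u ^ 2) ^ 2 * (√(1 - u ^ 2) ^ 2 - u ^ 2) ^ 2 / 16 := by ring
    _ = _ := by rw [hv]; ring

theorem sum_basisVec_sq (hu : u ^ 2 ≤ 1) {n : ℕ} {l r : Fin 2} (hn : n = l.val + r.val) :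
    ∑ o with o.tok = n, basisVec u o l r ^ 2 = 1 := by
  have hv : √(1 - u ^ 2) ^ 2 = 1 - u ^ 2 := Real.sq_sqrt (by linarith)
  subst hn
  rw [Finset.sum_filter, Outc.sum_univ]
  fin_cases l <;> fin_cases r <;> simp [basisVec, Outc.tok, uco, vco, hv]

/-- The outcomes of party `i` that agree with `a i` exactly if `i ∈ I`, and otherwise only in the
number of tokens. -/
def observed (a : Fin N → Outc) (I : Finset (Fin N)) (i : Fin N) : Finset Outc :=
  if i ∈ I then {a i} else Finset.univ.filter fun o => o.tok = (a i).tok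

theorem tok_eq_of_mem_observed {a : Fin N → Outc} {I : Finset (Fin N)} {i : Fin N} {o : Outc}
    (h : o ∈ observed a I i) : o.tok = (a i).tok := by
  unfold observed at h
  split_ifs at h <;> simp_all

theorem prod_sum_observed {a : Fin N → Outc} {f : Fin N → Outc → ℝ}
    (hf : ∀ i, ∑ o with o.tok = (a i).tok, f i o = 1) (I : Finset (Fin N)) :
    ∏ i, ∑ o ∈ observed a I i, f i o = ∏ i ∈ I, f i (a i) := by
  rw [← Fintype.prod_ite_mem I fun i => f i (a i)]
  refine Finset.prod_congr rfl fun i _ => ?_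
  unfold observed
  split_ifs
  · simp
  · exact hf i

theorem sum_ringP_observed (hu : u ^ 2 ≤ 1) {a : Fin N → Outc} {r : Fin N → Fin 2}
    (ha : Outc.tok ∘ a = tokenCount r) {i j : Fin N} (hij : r i ≠ r j) (I : Finset (Fin N)) :
    ∑ b ∈ Fintype.piFinset (observed a I), ringP N u b =
      (∏ i ∈ I, basisVec u (a i) (leftToken r i) (r i) ^ 2) / 2 ^ N := by
  have hb (b : Fin N → Outc) (hb : b ∈ Fintype.piFinset (observed a I)) :
      ringP N u b = (∏ k, basisVec u (b k) (leftToken r k) (r k) ^ 2) / 2 ^ N := by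
    refine ringP_eq_of_nonconstant (funext fun k => ?_) hij
    rw [← ha]
    exact tok_eq_of_mem_observed (Fintype.mem_piFinset.1 hb k)
  rw [Finset.sum_congr rfl hb, ← Finset.sum_div,
    ← Finset.prod_univ_sum (observed a I) fun k o => basisVec u o (leftToken r k) (r k) ^ 2,
    prod_sum_observed fun k => sum_basisVec_sq hu (congrFun ha k)]

end Routes

section Rearrangement

variable {α β γ : Type*} [MeasurableSpace α] [MeasurableSpace β] [MeasurableSpace γ]

theorem measurableEmbedding_prodRotate :
    MeasurableEmbedding fun z : α × β × γ => (z.2.1, z.2.2, z.1) :=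
  MeasurableEquiv.prodAssoc.measurableEmbedding.comp MeasurableEquiv.prodComm.measurableEmbedding

theorem measurableEmbedding_prodLeftComm :
    MeasurableEmbedding fun z : α × β × γ => (z.2.1, z.1, z.2.2) :=
  (MeasurableEmbedding.id.prodMap MeasurableEquiv.prodComm.measurableEmbedding).comp
    measurableEmbedding_prodRotate

variable (μ : Measure α) (ν : Measure β) (ρ : Measure γ) [SFinite μ] [SFinite ν] [SFinite ρ]

theorem measurePreserving_prodRotate :
    MeasurePreserving (fun z : α × β × γ => (z.2.1, z.2.2, z.1))
      (μ.prod (ν.prod ρ)) (ν.prod (ρ.prod μ)) :=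
  (measurePreserving_prodAssoc ν ρ μ).comp Measure.measurePreserving_swap

theorem measurePreserving_prodLeftComm :
    MeasurePreserving (fun z : α × β × γ => (z.2.1, z.1, z.2.2))
      (μ.prod (ν.prod ρ)) (ν.prod (μ.prod ρ)) :=
  ((MeasurePreserving.id ν).prod Measure.measurePreserving_swap).comp
    (measurePreserving_prodRotate μ ν ρ)

variable {μ ν ρ}

theorem integral_prod_mul_middle (f : β → ℝ) (g : α × γ → ℝ) :
    ∫ z, f z.2.1 * g (z.1, z.2.2) ∂μ.prod (ν.prod ρ) = (∫ y, f y ∂ν) * ∫ q, g q ∂μ.prod ρ := by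
  rw [← integral_prod_mul, ← (measurePreserving_prodLeftComm ν μ ρ).integral_comp
    measurableEmbedding_prodLeftComm]

theorem integral_prod_mul_last (f : γ → ℝ) (g : α × β → ℝ) :
    ∫ z, f z.2.2 * g (z.1, z.2.1) ∂μ.prod (ν.prod ρ) = (∫ y, f y ∂ρ) * ∫ q, g q ∂μ.prod ν := by
  rw [← integral_prod_mul, ← (measurePreserving_prodRotate ρ μ ν).integral_comp
    measurableEmbedding_prodRotate]

end Rearrangement

section Rigidity

variable {α β γ : Type*} [MeasurableSpace α] [MeasurableSpace β] [MeasurableSpace γ]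

/-- Since `f` takes both values, the bounds `0 ≤ n ≤ 2` confine `k` to `{0, 1}`. -/
theorem exists_fin_two_ae_eq_add {μ : Measure α} {ν : Measure β} {ρ : Measure γ}
    [SFinite μ] [SFinite ν] [SFinite ρ] {n : α × γ → ℕ} (hn : Measurable n) {f : α → Fin 2}
    {k : β × γ → ℤ}
    (h : ∀ᵐ z ∂μ.prod (ν.prod ρ), n (z.1, z.2.2) ≤ 2 ∧ (n (z.1, z.2.2) : ℤ) = (f z.1).val + k z.2)
    (h0 : ∃ᶠ x in ae μ, f x = 0) (h1 : ∃ᶠ x in ae μ, f x = 1) :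
    ∃ g : γ → Fin 2, Measurable g ∧
      ∀ᵐ z ∂μ.prod (ν.prod ρ), n (z.1, z.2.2) = (f z.1).val + (g z.2.2).val := by
  have hsections := Measure.ae_ae_of_ae_prod h
  obtain ⟨a, hfa, ha⟩ := (h0.and_eventually hsections).exists
  obtain ⟨b, hfb, hb⟩ := (h1.and_eventually hsections).exists
  refine ⟨fun y => Fin.ofNat 2 (n (a, y)),
    (measurable_of_countable (Fin.ofNat 2)).comp (hn.comp measurable_prodMk_left), ?_⟩
  filter_upwards [h, Measure.quasiMeasurePreserving_snd.ae ha,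
    Measure.quasiMeasurePreserving_snd.ae hb] with z hz hza hzb
  simp only [hfa, hfb, Fin.val_zero, Fin.val_one] at hza hzb
  simp only [Fin.val_ofNat]
  omega

variable {μ : Measure α} {ν : Measure β} {ρ : Measure γ} [SFinite μ] [SFinite ν] [SFinite ρ]
  {n₁ : α × γ → ℕ} {n₂ : α × β → ℕ} {n₃ : β × γ → ℕ} {n₄ : γ → ℕ}

theorem vec_eq_tokenCount_iff {a b c d : ℕ} {r : Fin 4 → Fin 2} :
    ![a, b, c, d] = tokenCount r ↔
      a = 1 - (r 3).val + (r 0).val ∧ b = 1 - (r 0).val + (r 1).val ∧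
        c = 1 - (r 1).val + (r 2).val ∧ d = 1 - (r 2).val + (r 3).val := by
  have hlast : (-1 : Fin 4) = 3 := rfl
  simp [funext_iff, Fin.forall_fin_succ, tokenCount, leftToken, one_sub_val_fin_two, hlast]

/-- Fix a value of the tripartite source that makes the last party announce two tokens: then both
tokens of that source go to the last party, and the counts of its two other neighbours reveal the
destinations of the tokens of the bipartite sources. -/
theorem exists_fin_two_ae_eq_bipartite (hn₁ : Measurable n₁) (hn₃ : Measurable n₃)
    (h : ∀ᵐ z ∂μ.prod (ν.prod ρ), ∃ r,
      ![n₁ (z.1, z.2.2), n₂ (z.1, z.2.1), n₃ (z.2.1, z.2.2), n₄ z.2.2] = tokenCount r)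
    (h4 : ∃ᶠ c in ae ρ, n₄ c = 2) :
    ∃ (f : α → Fin 2) (g : β → Fin 2), Measurable f ∧ Measurable g ∧
      ∀ᵐ z ∂μ.prod ν, n₂ (z.1, z.2) = 1 - (f z.1).val + (g z.2).val := by
  have hsections := Measure.ae_ae_of_ae_prod
    ((measurePreserving_prodRotate ρ μ ν).quasiMeasurePreserving.ae h)
  obtain ⟨c, hc, h⟩ := (h4.and_eventually hsections).exists
  refine ⟨fun x => Fin.ofNat 2 (n₁ (x, c)), fun y => 1 - Fin.ofNat 2 (n₃ (y, c)),
    (measurable_of_countable (Fin.ofNat 2)).comp (hn₁.comp measurable_prodMk_right),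
    (measurable_of_countable fun n => 1 - Fin.ofNat 2 n).comp
      (hn₃.comp measurable_prodMk_right), ?_⟩
  filter_upwards [h] with z ⟨r, hz⟩
  rw [vec_eq_tokenCount_iff] at hz
  simp only [one_sub_val_fin_two, Fin.val_ofNat]
  omega

theorem exists_fin_two_ae_eq_tripartite (hn₁ : Measurable n₁) (hn₃ : Measurable n₃)
    (h : ∀ᵐ z ∂μ.prod (ν.prod ρ), ∃ r,
      ![n₁ (z.1, z.2.2), n₂ (z.1, z.2.1), n₃ (z.2.1, z.2.2), n₄ z.2.2] = tokenCount r)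
    {f : α → Fin 2} {g : β → Fin 2}
    (hfg : ∀ᵐ z ∂μ.prod (ν.prod ρ), n₂ (z.1, z.2.1) = 1 - (f z.1).val + (g z.2.1).val)
    (h2 : ∃ᶠ z in ae (μ.prod (ν.prod ρ)), n₂ (z.1, z.2.1) = 2)
    (h0 : ∃ᶠ z in ae (μ.prod (ν.prod ρ)), n₂ (z.1, z.2.1) = 0) :
    ∃ s t : γ → Fin 2, Measurable s ∧ Measurable t ∧ ∀ᵐ z ∂μ.prod (ν.prod ρ),
      ![n₁ (z.1, z.2.2), n₂ (z.1, z.2.1), n₃ (z.2.1, z.2.2), n₄ z.2.2] =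
        tokenCount ![f z.1, g z.2.1, s z.2.2, t z.2.2] := by
  have hfst : Filter.Tendsto Prod.fst (ae (μ.prod (ν.prod ρ))) (ae μ) :=
    Measure.quasiMeasurePreserving_fst.tendsto_ae
  have hsnd : Filter.Tendsto (fun z : α × β × γ => z.2.1) (ae (μ.prod (ν.prod ρ))) (ae ν) :=
    Measure.quasiMeasurePreserving_fst.tendsto_ae.comp Measure.quasiMeasurePreserving_snd.tendsto_ae
  have hdiff₁ : ∀ᵐ z ∂μ.prod (ν.prod ρ), n₁ (z.1, z.2.2) ≤ 2 ∧
      (n₁ (z.1, z.2.2) : ℤ) = (f z.1).val + (3 - (g z.2.1).val - n₃ (z.2.1, z.2.2) - n₄ z.2.2) := by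
    filter_upwards [h, hfg] with z ⟨r, hz⟩ hzfg
    rw [vec_eq_tokenCount_iff] at hz
    omega
  have hdiff₃ : ∀ᵐ z ∂ν.prod (μ.prod ρ), n₃ (z.1, z.2.2) ≤ 2 ∧
      (n₃ (z.1, z.2.2) : ℤ) =
        (1 - g z.1).val + (2 + (f z.2.1).val - n₁ (z.2.1, z.2.2) - n₄ z.2.2) := by
    filter_upwards [(measurePreserving_prodLeftComm ν μ ρ).quasiMeasurePreserving.ae h,
      (measurePreserving_prodLeftComm ν μ ρ).quasiMeasurePreserving.ae hfg] with
      z ⟨r, hz⟩ hzfg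
    rw [vec_eq_tokenCount_iff] at hz
    simp only [one_sub_val_fin_two]
    omega
  have hf0 := hfst.frequently (p := fun x => f x = 0)
    ((h2.and_eventually hfg).mono fun z hz => by omega)
  have hf1 := hfst.frequently (p := fun x => f x = 1)
    ((h0.and_eventually hfg).mono fun z hz => by omega)
  have hg0 := hsnd.frequently (p := fun y => 1 - g y = 0)
    ((h2.and_eventually hfg).mono fun z hz => by omega)
  have hg1 := hsnd.frequently (p := fun y => 1 - g y = 1)
    ((h0.and_eventually hfg).mono fun z hz => by omega)
  obtain ⟨t, ht, hn₁t⟩ := exists_fin_two_ae_eq_add hn₁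
    (k := fun w => 3 - (g w.1).val - n₃ w - n₄ w.2) hdiff₁ hf0 hf1
  obtain ⟨s, hs, hn₃s⟩ := exists_fin_two_ae_eq_add hn₃ (f := fun y => 1 - g y)
    (k := fun w => 2 + (f w.1).val - n₁ w - n₄ w.2) hdiff₃ hg0 hg1
  refine ⟨s, fun c => 1 - t c, hs, (measurable_of_countable fun b => 1 - b).comp ht, ?_⟩
  filter_upwards [h, hfg, hn₁t,
    (measurePreserving_prodLeftComm μ ν ρ).quasiMeasurePreserving.ae hn₃s] with
    z ⟨r, hz⟩ hzfg hz₁ hz₃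
  rw [vec_eq_tokenCount_iff] at hz ⊢
  simp only [one_sub_val_fin_two, Matrix.cons_val] at hz₃ ⊢
  omega

theorem exists_fin_two_ae_eq_tokenCount (hn₁ : Measurable n₁) (hn₃ : Measurable n₃)
    (h : ∀ᵐ z ∂μ.prod (ν.prod ρ), ∃ r,
      ![n₁ (z.1, z.2.2), n₂ (z.1, z.2.1), n₃ (z.2.1, z.2.2), n₄ z.2.2] = tokenCount r)
    (h2 : ∃ᶠ z in ae (μ.prod (ν.prod ρ)), n₂ (z.1, z.2.1) = 2 ∧ n₄ z.2.2 = 2)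
    (h0 : ∃ᶠ z in ae (μ.prod (ν.prod ρ)), n₂ (z.1, z.2.1) = 0) :
    ∃ (f : α → Fin 2) (g : β → Fin 2) (s t : γ → Fin 2),
      Measurable f ∧ Measurable g ∧ Measurable s ∧ Measurable t ∧
      ∀ᵐ z ∂μ.prod (ν.prod ρ),
        ![n₁ (z.1, z.2.2), n₂ (z.1, z.2.1), n₃ (z.2.1, z.2.2), n₄ z.2.2] =
          tokenCount ![f z.1, g z.2.1, s z.2.2, t z.2.2] := by
  have hlast : Filter.Tendsto (fun z : α × β × γ => z.2.2) (ae (μ.prod (ν.prod ρ))) (ae ρ) :=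
    Measure.quasiMeasurePreserving_snd.tendsto_ae.comp Measure.quasiMeasurePreserving_snd.tendsto_ae
  obtain ⟨f, g, hf, hg, hbi⟩ := exists_fin_two_ae_eq_bipartite hn₁ hn₃ h
    (hlast.frequently (p := fun c => n₄ c = 2) (h2.mono fun _ hz => hz.2))
  have hfg := (measurePreserving_prodAssoc μ ν ρ).symm.quasiMeasurePreserving.ae
    (Measure.quasiMeasurePreserving_fst.ae hbi)
  obtain ⟨s, t, hs, ht, htri⟩ :=
    exists_fin_two_ae_eq_tripartite hn₁ hn₃ h hfg (h2.mono fun _ hz => hz.1) h0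
  exact ⟨f, g, s, t, hf, hg, hs, ht, htri⟩

end Rigidity

/-- A response kernel with outcomes in `Outc`, for a party whose hidden variables range over `α`. -/
structure IsResponse {α : Type*} [MeasurableSpace α] (p : Outc → α → ℝ) : Prop where
  measurable : ∀ o, Measurable (p o)
  nonneg : ∀ o x, 0 ≤ p o x
  sum_eq_one : ∀ x, ∑ o, p o x = 1

theorem IsResponse.comp {α β : Type*} [MeasurableSpace α] [MeasurableSpace β] {p : Outc → β → ℝ}
    (hp : IsResponse p) {f : α → β} (hf : Measurable f) : IsResponse fun o x => p o (f x) :=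
  ⟨fun o => (hp.measurable o).comp hf, fun o x => hp.nonneg o (f x), fun x => hp.sum_eq_one (f x)⟩

theorem IsResponse.le_one {α : Type*} [MeasurableSpace α] {p : Outc → α → ℝ} (hp : IsResponse p)
    (o : Outc) (x : α) : p o x ≤ 1 :=
  hp.sum_eq_one x ▸ Finset.single_le_sum (fun o _ => hp.nonneg o x) (Finset.mem_univ o)

/-- The token count announced by a party with outcome probabilities `p` whose possible outcomes all
carry the same number of tokens; the value is meaningless otherwise. -/
noncomputable def announcedTok (p : Outc → ℝ) : ℕ :=
  open Classical in if p .zero ≠ 0 then 0 else if p .two ≠ 0 then 2 else 1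

theorem exists_tok_eq_announcedTok {p : Outc → ℝ} (hp : ∑ o, p o ≠ 0) :
    ∃ o, p o ≠ 0 ∧ o.tok = announcedTok p := by
  unfold announcedTok
  split_ifs with h0 h2
  · exact ⟨.zero, h0, rfl⟩
  · exact ⟨.two, h2, rfl⟩
  · obtain ⟨i, -, hi⟩ := Finset.exists_ne_zero_of_sum_ne_zero
      (s := Finset.univ) (f := fun i => p (.one i)) (by
        simpa [Outc.sum_univ, not_not.1 h0, not_not.1 h2] using hp)
    exact ⟨.one i, hi, rfl⟩

theorem IsResponse.measurable_announcedTok {α : Type*} [MeasurableSpace α] {p : Outc → α → ℝ}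
    (hp : IsResponse p) : Measurable fun x => announcedTok fun o => p o x := by
  have hsupp (o : Outc) : MeasurableSet {x | p o x ≠ 0} :=
    (measurableSet_eq_fun (hp.measurable o) measurable_const).compl
  exact Measurable.ite (hsupp .zero) measurable_const
    (Measurable.ite (hsupp .two) measurable_const measurable_const)

theorem one_le_mul_one_sub_add {a b c : ℝ} (ha : 0 ≤ a) (hb : 0 ≤ b) (hc : 0 ≤ c) (ha1 : a ≤ 1) :
    1 ≤ (1 - a) * (1 - b) * (1 - c) + (a + b + c) := by
  nlinarith [mul_nonneg ha hb, mul_nonneg ha hc, mul_nonneg (mul_nonneg hb hc) (sub_nonneg.2 ha1)]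

theorem apply_eq_of_forall_sum_eq {ι κ : Type*} [Fintype ι] {t : κ → ℕ} {S : ι → Set κ} {n : ℕ}
    (hS : ∀ a : ι → κ, (∀ i, a i ∈ S i) → ∑ i, t (a i) = n) {c : ι → κ} (hc : ∀ i, c i ∈ S i)
    {i : ι} {b : κ} (hb : b ∈ S i) : t b = t (c i) := by
  classical
  have hupdate (j : ι) : Function.update c i b j ∈ S j := by
    obtain rfl | hj := eq_or_ne j i
    · simpa using hb
    · simpa [hj] using hc j
  have hsum := (hS _ hupdate).trans (hS c hc).symm
  simp only [← Finset.add_sum_erase _ _ (Finset.mem_univ i), Function.update_self] at hsum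
  rw [Finset.sum_congr rfl fun j hj => by rw [Function.update_of_ne (Finset.ne_of_mem_erase hj)]]
    at hsum
  exact Nat.add_right_cancel hsum

/-- A local model for the square-network distribution on the network whose source `S₁` connects
`A₁, A₂`, whose source `S₂` connects `A₂, A₃`, and whose source `S₃` connects `A₁, A₃, A₄`. -/
structure SquareModel (u : ℝ) (Λ₁ Λ₂ Λ₃ : Type*) [MeasurableSpace Λ₁] [MeasurableSpace Λ₂]
    [MeasurableSpace Λ₃] where
  μ₁ : Measure Λ₁
  μ₂ : Measure Λ₂
  μ₃ : Measure Λ₃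
  [prob₁ : IsProbabilityMeasure μ₁]
  [prob₂ : IsProbabilityMeasure μ₂]
  [prob₃ : IsProbabilityMeasure μ₃]
  p₁ : Outc → Λ₁ × Λ₃ → ℝ
  p₂ : Outc → Λ₁ × Λ₂ → ℝ
  p₃ : Outc → Λ₂ × Λ₃ → ℝ
  p₄ : Outc → Λ₃ → ℝ
  isResponse₁ : IsResponse p₁
  isResponse₂ : IsResponse p₂
  isResponse₃ : IsResponse p₃
  isResponse₄ : IsResponse p₄
  ringP_eq : ∀ a b c d, ringP 4 u ![a, b, c, d] =
    ∫ x, ∫ y, ∫ z, p₁ a (x, z) * p₂ b (x, y) * p₃ c (y, z) * p₄ d z ∂μ₃ ∂μ₂ ∂μ₁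

namespace SquareModel

variable {u : ℝ} {Λ₁ Λ₂ Λ₃ : Type*} [MeasurableSpace Λ₁] [MeasurableSpace Λ₂] [MeasurableSpace Λ₃]
  (m : SquareModel u Λ₁ Λ₂ Λ₃)

attribute [instance] prob₁ prob₂ prob₃

/-- The joint distribution of the hidden variables. -/
noncomputable def law : Measure (Λ₁ × Λ₂ × Λ₃) := m.μ₁.prod (m.μ₂.prod m.μ₃)

instance : IsProbabilityMeasure m.law := inferInstanceAs (IsProbabilityMeasure (m.μ₁.prod _))

/-- The outcome probabilities of the parties, as functions of the joint hidden variable; the party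
with index `i` is `Aᵢ₊₁`. -/
def response (i : Fin 4) (o : Outc) (z : Λ₁ × Λ₂ × Λ₃) : ℝ :=
  ![m.p₁ o (z.1, z.2.2), m.p₂ o (z.1, z.2.1), m.p₃ o (z.2.1, z.2.2), m.p₄ o z.2.2] i

theorem isResponse_response (i : Fin 4) : IsResponse (m.response i) := by
  fin_cases i
  exacts [m.isResponse₁.comp (f := fun z : Λ₁ × Λ₂ × Λ₃ => (z.1, z.2.2)) (by fun_prop),
    m.isResponse₂.comp (f := fun z : Λ₁ × Λ₂ × Λ₃ => (z.1, z.2.1)) (by fun_prop),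
    m.isResponse₃.comp (f := fun z : Λ₁ × Λ₂ × Λ₃ => (z.2.1, z.2.2)) (by fun_prop),
    m.isResponse₄.comp (f := fun z : Λ₁ × Λ₂ × Λ₃ => z.2.2) (by fun_prop)]

theorem prod_response_nonneg (a : Fin 4 → Outc) (I : Finset (Fin 4)) (z : Λ₁ × Λ₂ × Λ₃) :
    0 ≤ ∏ i ∈ I, m.response i (a i) z :=
  Finset.prod_nonneg fun i _ => (m.isResponse_response i).nonneg _ z

theorem integrable_prod_response (a : Fin 4 → Outc) (I : Finset (Fin 4)) :
    Integrable (fun z => ∏ i ∈ I, m.response i (a i) z) m.law := by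
  refine Integrable.of_mem_Icc 0 1
    (Finset.measurable_fun_prod I fun i _ => (m.isResponse_response i).measurable _).aemeasurable
    (.of_forall fun z => ⟨m.prod_response_nonneg a I z, ?_⟩)
  exact Finset.prod_le_one (fun i _ => (m.isResponse_response i).nonneg _ z)
    fun i _ => (m.isResponse_response i).le_one _ z

theorem ringP_eq_integral (a : Fin 4 → Outc) :
    ringP 4 u a = ∫ z, ∏ i, m.response i (a i) z ∂m.law := by
  have hint := m.integrable_prod_response a Finset.univ
  rw [law] at hint ⊢
  have ha : ringP 4 u a = ringP 4 u ![a 0, a 1, a 2, a 3] :=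
    congrArg _ (List.ofFn_inj.1 rfl)
  rw [ha, m.ringP_eq, integral_prod _ hint]
  refine integral_congr_ae ?_
  filter_upwards [hint.prod_right_ae] with x hx
  rw [integral_prod _ hx]
  simp [response, Fin.prod_univ_four]

theorem sum_ringP_eq_integral (s : Fin 4 → Finset Outc) :
    ∑ a ∈ Fintype.piFinset s, ringP 4 u a = ∫ z, ∏ i, ∑ o ∈ s i, m.response i o z ∂m.law := by
  simp only [Finset.prod_univ_sum]
  rw [integral_finsetSum _ fun a _ => m.integrable_prod_response a Finset.univ]
  simp only [m.ringP_eq_integral]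

theorem ae_forall_ringP_ne_zero :
    ∀ᵐ z ∂m.law, ∀ a : Fin 4 → Outc, (∀ i, m.response i (a i) z ≠ 0) → ringP 4 u a ≠ 0 := by
  refine ae_all_iff.2 fun a => ?_
  by_cases ha : ringP 4 u a = 0
  · rw [m.ringP_eq_integral, integral_eq_zero_iff_of_nonneg
      (m.prod_response_nonneg a Finset.univ) (m.integrable_prod_response a Finset.univ)] at ha
    filter_upwards [ha] with z hz hne
    exact absurd hz (Finset.prod_ne_zero_iff.2 fun i _ => hne i)
  · exact .of_forall fun _ _ => ha

theorem frequently_response_ne_zero {a : Fin 4 → Outc} (ha : ringP 4 u a ≠ 0) :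
    ∃ᶠ z in ae m.law, ∀ i, m.response i (a i) z ≠ 0 := by
  by_contra h
  refine ha ((m.ringP_eq_integral a).trans (integral_eq_zero_of_ae ?_))
  filter_upwards [Filter.not_frequently.1 h] with z hz
  simpa [Finset.prod_eq_zero_iff] using hz

theorem ae_tok_eq_announcedTok :
    ∀ᵐ z ∂m.law, (∃ r, (fun i => announcedTok fun o => m.response i o z) = tokenCount r) ∧
      ∀ i o, m.response i o z ≠ 0 → o.tok = announcedTok fun o => m.response i o z := by
  filter_upwards [m.ae_forall_ringP_ne_zero] with z hz
  choose c hc hctok using fun i => exists_tok_eq_announcedTok (p := fun o => m.response i o z)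
    (by simp [(m.isResponse_response i).sum_eq_one])
  have hroute (a : Fin 4 → Outc) (ha : ∀ i, m.response i (a i) z ≠ 0) :=
    exists_tok_comp_eq_of_ringP_ne_zero (hz a ha)
  have hsum (a : Fin 4 → Outc) (ha : ∀ i, m.response i (a i) z ≠ 0) : ∑ i, (a i).tok = 4 := by
    obtain ⟨r, hr⟩ := hroute a ha
    exact (congrArg (fun n => ∑ i, n i) hr).trans (sum_tokenCount r)
  obtain ⟨r, hr⟩ := hroute c hc
  refine ⟨⟨r, by rw [← hr]; exact funext fun i => (hctok i).symm⟩, fun i o ho => ?_⟩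
  exact (apply_eq_of_forall_sum_eq (S := fun i => {o | m.response i o z ≠ 0}) hsum hc ho).trans
    (hctok i)

/-- A deterministic token assignment underlying the model: the token of `S₁` goes to `A₁` if and
only if `ρ₁ = 1`, that of `S₂` goes to `A₂` if and only if `ρ₂ = 1`, and `ρ₃`, `ρ₄` route the two
tokens of `S₃`, as if it consisted of a source between `A₃, A₄` and one between `A₄, A₁`. Every
party announces the number of tokens it receives. -/
structure Routing where
  ρ₁ : Λ₁ → Fin 2
  ρ₂ : Λ₂ → Fin 2
  ρ₃ : Λ₃ → Fin 2
  ρ₄ : Λ₃ → Fin 2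
  measurable₁ : Measurable ρ₁
  measurable₂ : Measurable ρ₂
  measurable₃ : Measurable ρ₃
  measurable₄ : Measurable ρ₄
  ae_tok_eq : ∀ᵐ z ∂m.law, ∀ i o, m.response i o z ≠ 0 →
    o.tok = tokenCount ![ρ₁ z.1, ρ₂ z.2.1, ρ₃ z.2.2, ρ₄ z.2.2] i

theorem frequently_announcedTok_eq {a : Fin 4 → Outc} (ha : ringP 4 u a ≠ 0) :
    ∃ᶠ z in ae m.law, ∀ i, (announcedTok fun o => m.response i o z) = (a i).tok :=
  ((m.frequently_response_ne_zero ha).and_eventually m.ae_tok_eq_announcedTok).mono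
    fun _ hz i => (hz.2.2 i (a i) (hz.1 i)).symm

theorem nonempty_routing : Nonempty m.Routing := by
  have hpos₂ : ringP 4 u ![.zero, .two, .zero, .two] ≠ 0 := by
    rw [ringP_eq_of_nonconstant (r := ![0, 1, 0, 1]) (i := 0) (j := 1) (by decide) (by decide)]
    simp [Fin.prod_univ_four, basisVec, leftToken]
  have hpos₀ : ringP 4 u ![.two, .zero, .two, .zero] ≠ 0 := by
    rw [ringP_eq_of_nonconstant (r := ![1, 0, 1, 0]) (i := 0) (j := 1) (by decide) (by decide)]
    simp [Fin.prod_univ_four, basisVec, leftToken]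
  let n₁ := fun q => announcedTok fun o => m.p₁ o q
  let n₂ := fun q => announcedTok fun o => m.p₂ o q
  let n₃ := fun q => announcedTok fun o => m.p₃ o q
  let n₄ := fun q => announcedTok fun o => m.p₄ o q
  have hn₁ : Measurable n₁ := m.isResponse₁.measurable_announcedTok
  have hn₃ : Measurable n₃ := m.isResponse₃.measurable_announcedTok
  have hn (z : Λ₁ × Λ₂ × Λ₃) : (fun i => announcedTok fun o => m.response i o z) =
      ![n₁ (z.1, z.2.2), n₂ (z.1, z.2.1), n₃ (z.2.1, z.2.2), n₄ z.2.2] :=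
    List.ofFn_inj.1 rfl
  obtain ⟨ρ₁, ρ₂, ρ₃, ρ₄, hρ₁, hρ₂, hρ₃, hρ₄, hcount⟩ := exists_fin_two_ae_eq_tokenCount hn₁ hn₃
    (m.ae_tok_eq_announcedTok.mono fun z hz => hn z ▸ hz.1)
    ((m.frequently_announcedTok_eq hpos₂).mono fun z hz => ⟨hz 1, hz 3⟩)
    ((m.frequently_announcedTok_eq hpos₀).mono fun z hz => hz 1)
  refine ⟨⟨ρ₁, ρ₂, ρ₃, ρ₄, hρ₁, hρ₂, hρ₃, hρ₄, ?_⟩⟩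
  filter_upwards [m.ae_tok_eq_announcedTok, hcount] with z hz hzcount i o ho
  rw [← hzcount, ← hn]
  exact hz.2 i o ho

namespace Routing

variable {m} (t : m.Routing)

/-- The part of the hidden-variable space on which the tokens follow the route `r`. -/
def cell (r : Fin 4 → Fin 2) : Set (Λ₁ × Λ₂ × Λ₃) :=
  (t.ρ₁ ⁻¹' {r 0}) ×ˢ (t.ρ₂ ⁻¹' {r 1}) ×ˢ (t.ρ₃ ⁻¹' {r 2} ∩ t.ρ₄ ⁻¹' {r 3})

theorem mem_cell_iff {r : Fin 4 → Fin 2} {z : Λ₁ × Λ₂ × Λ₃} :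
    z ∈ t.cell r ↔ ![t.ρ₁ z.1, t.ρ₂ z.2.1, t.ρ₃ z.2.2, t.ρ₄ z.2.2] = r := by
  simp [cell, funext_iff, Fin.forall_fin_succ]

theorem measurableSet_cell (r : Fin 4 → Fin 2) : MeasurableSet (t.cell r) :=
  (t.measurable₁ (.singleton _)).prod ((t.measurable₂ (.singleton _)).prod
    ((t.measurable₃ (.singleton _)).inter (t.measurable₄ (.singleton _))))

/-- Off the cell some party announces a count different from that of `a`, and on it the parties
outside `I` announce the count of `a` with certainty. -/
theorem ae_prod_sum_observed_eq_indicator {a : Fin 4 → Outc} {r : Fin 4 → Fin 2}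
    (ha : Outc.tok ∘ a = tokenCount r) {i j : Fin 4} (hij : r i ≠ r j) (I : Finset (Fin 4)) :
    (fun z => ∏ i, ∑ o ∈ observed a I i, m.response i o z) =ᵐ[m.law]
      (t.cell r).indicator fun z => ∏ i ∈ I, m.response i (a i) z := by
  filter_upwards [t.ae_tok_eq] with z hz
  by_cases hr : z ∈ t.cell r
  · rw [Set.indicator_of_mem hr]
    rw [mem_cell_iff] at hr
    refine prod_sum_observed (fun i => ?_) I
    rw [← (m.isResponse_response i).sum_eq_one z]
    refine Finset.sum_subset (Finset.filter_subset _ _) fun o _ ho => ?_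
    by_contra hne
    exact ho (by simp [hz i o hne, hr, ← ha])
  · rw [Set.indicator_of_notMem hr]
    rw [mem_cell_iff] at hr
    obtain ⟨k, hk⟩ : ∃ k, tokenCount ![t.ρ₁ z.1, t.ρ₂ z.2.1, t.ρ₃ z.2.2, t.ρ₄ z.2.2] k ≠
        tokenCount r k := by
      by_contra! h
      exact hr (eq_of_tokenCount_eq (funext h).symm hij).symm
    refine Finset.prod_eq_zero (Finset.mem_univ k) (Finset.sum_eq_zero fun o ho => ?_)
    by_contra hne
    exact hk (by rw [← hz k o hne, tok_eq_of_mem_observed ho, ← ha]; rfl)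

theorem setIntegral_cell (hu : u ^ 2 ≤ 1) {a : Fin 4 → Outc} {r : Fin 4 → Fin 2}
    (ha : Outc.tok ∘ a = tokenCount r) {i j : Fin 4} (hij : r i ≠ r j) (I : Finset (Fin 4)) :
    ∫ z in t.cell r, ∏ i ∈ I, m.response i (a i) z ∂m.law =
      (∏ i ∈ I, basisVec u (a i) (leftToken r i) (r i) ^ 2) / 16 := by
  rw [← integral_indicator (t.measurableSet_cell r),
    ← integral_congr_ae (t.ae_prod_sum_observed_eq_indicator ha hij I),
    ← m.sum_ringP_eq_integral, sum_ringP_observed hu ha hij]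
  norm_num

/-- The distribution of the first hidden variable restricted to one destination of its token. -/
noncomputable abbrev part₁ (b : Fin 2) : Measure Λ₁ := m.μ₁.restrict (t.ρ₁ ⁻¹' {b})

/-- The distribution of the second hidden variable restricted to one destination of its token. -/
noncomputable abbrev part₂ (b : Fin 2) : Measure Λ₂ := m.μ₂.restrict (t.ρ₂ ⁻¹' {b})

/-- The distribution of the third hidden variable restricted to one pair of destinations of its
tokens. -/
noncomputable abbrev part₃ (b c : Fin 2) : Measure Λ₃ :=
  m.μ₃.restrict (t.ρ₃ ⁻¹' {b} ∩ t.ρ₄ ⁻¹' {c})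

theorem restrict_cell (i j k l : Fin 2) : m.law.restrict (t.cell ![i, j, k, l]) =
    (t.part₁ i).prod ((t.part₂ j).prod (t.part₃ k l)) := by
  simp only [part₁, part₂, part₃, Measure.prod_restrict]
  rfl

theorem real_law_cell (hu : u ^ 2 ≤ 1) {r : Fin 4 → Fin 2} {i j : Fin 4} (hij : r i ≠ r j) :
    m.law.real (t.cell r) = 1 / 16 := by
  choose a ha using exists_tok_eq_tokenCount r
  simpa using t.setIntegral_cell hu (funext ha) hij ∅

theorem real_law_cell_eq_mul (i j k l : Fin 2) : m.law.real (t.cell ![i, j, k, l]) =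
    (t.part₁ i).real .univ * ((t.part₂ j).real .univ * (t.part₃ k l).real .univ) := by
  rw [← measureReal_restrict_apply_univ, restrict_cell, ← measureReal_prod_prod,
    ← measureReal_prod_prod, Set.univ_prod_univ, Set.univ_prod_univ]

theorem real_part₁_zero_eq_one (hu : u ^ 2 ≤ 1) :
    (t.part₁ 0).real .univ = (t.part₁ 1).real .univ := by
  have h0 := t.real_law_cell hu (r := ![0, 0, 1, 0]) (i := 1) (j := 2) (by decide)
  have h1 := t.real_law_cell hu (r := ![1, 0, 1, 0]) (i := 1) (j := 2) (by decide)
  rw [real_law_cell_eq_mul] at h0 h1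
  exact mul_right_cancel₀ (right_ne_zero_of_mul (h0.trans_ne (by norm_num))) (h0.trans h1.symm)

theorem real_part₂_zero_eq_one (hu : u ^ 2 ≤ 1) :
    (t.part₂ 0).real .univ = (t.part₂ 1).real .univ := by
  have h0 := t.real_law_cell hu (r := ![0, 0, 1, 0]) (i := 0) (j := 2) (by decide)
  have h1 := t.real_law_cell hu (r := ![0, 1, 1, 0]) (i := 0) (j := 2) (by decide)
  rw [real_law_cell_eq_mul, mul_left_comm] at h0 h1
  exact mul_right_cancel₀ (right_ne_zero_of_mul (h0.trans_ne (by norm_num))) (h0.trans h1.symm)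

theorem setIntegral_cell_zero_eq_fst (hu : u ^ 2 ≤ 1) (j k l : Fin 2) (g : Λ₂ × Λ₃ → ℝ) :
    ∫ z in t.cell ![0, j, k, l], g z.2 ∂m.law = ∫ z in t.cell ![1, j, k, l], g z.2 ∂m.law := by
  rw [restrict_cell, restrict_cell, integral_fun_snd, integral_fun_snd, t.real_part₁_zero_eq_one hu]

theorem setIntegral_cell_zero_eq_snd (hu : u ^ 2 ≤ 1) (i k l : Fin 2) (g : Λ₁ × Λ₃ → ℝ) :
    ∫ z in t.cell ![i, 0, k, l], g (z.1, z.2.2) ∂m.law =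
      ∫ z in t.cell ![i, 1, k, l], g (z.1, z.2.2) ∂m.law := by
  have hfactor (j : Fin 2) : ∫ z in t.cell ![i, j, k, l], g (z.1, z.2.2) ∂m.law =
      (t.part₂ j).real .univ * ∫ q, g q ∂(t.part₁ i).prod (t.part₃ k l) := by
    simpa [restrict_cell] using integral_prod_mul_middle (μ := t.part₁ i) (ν := t.part₂ j)
      (ρ := t.part₃ k l) 1 g
  rw [hfactor, hfactor, t.real_part₂_zero_eq_one hu]

theorem setIntegral_cell_zero_response_three (hu : u ^ 2 ≤ 1) :
    ∫ z in t.cell ![0, 0, 0, 0], m.response 3 (.one 0) z ∂m.law = (1 - u ^ 2) / 16 := by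
  have h := t.setIntegral_cell hu (a := ![.two, .zero, .one 0, .one 0]) (r := ![1, 0, 0, 0])
    (i := 0) (j := 1) (by decide) (by decide) {3}
  simp only [Finset.prod_singleton] at h
  refine ((t.setIntegral_cell_zero_eq_fst hu 0 0 0 fun y => m.p₄ (.one 0) y.2).trans h).trans ?_
  simp [basisVec, leftToken, vco, Real.sq_sqrt (sub_nonneg.2 hu)]

theorem setIntegral_cell_zero_response_zero_mul (hu : u ^ 2 ≤ 1) :
    ∫ z in t.cell ![0, 0, 0, 0], m.response 0 (.one 0) z * m.response 3 (.one 0) z ∂m.law =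
      (1 - u ^ 2) ^ 2 / 16 := by
  have h := t.setIntegral_cell hu (a := ![.one 0, .two, .zero, .one 0]) (r := ![0, 1, 0, 0])
    (i := 0) (j := 1) (by decide) (by decide) {0, 3}
  simp only [Finset.prod_pair (show (0 : Fin 4) ≠ 3 by decide)] at h
  refine ((t.setIntegral_cell_zero_eq_snd hu 0 0 0 fun q =>
    m.p₁ (.one 0) q * m.p₄ (.one 0) q.2).trans h).trans ?_
  simp [basisVec, leftToken, vco, Real.sq_sqrt (sub_nonneg.2 hu), ← sq]

theorem setIntegral_cell_zero_response_two_mul (hu : u ^ 2 ≤ 1) :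
    ∫ z in t.cell ![0, 0, 0, 0], m.response 2 (.one 0) z * m.response 3 (.one 0) z ∂m.law =
      (1 - u ^ 2) ^ 2 / 16 := by
  have h := t.setIntegral_cell hu (a := ![.two, .zero, .one 0, .one 0]) (r := ![1, 0, 0, 0])
    (i := 0) (j := 1) (by decide) (by decide) {2, 3}
  simp only [Finset.prod_pair (show (2 : Fin 4) ≠ 3 by decide)] at h
  refine ((t.setIntegral_cell_zero_eq_fst hu 0 0 0 fun y =>
    m.p₃ (.one 0) y * m.p₄ (.one 0) y.2).trans h).trans ?_
  simp [basisVec, leftToken, vco, Real.sq_sqrt (sub_nonneg.2 hu), ← sq]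

theorem setIntegral_cell_mul_last (i j k l : Fin 2) (f : Λ₃ → ℝ) (g : Λ₁ × Λ₂ → ℝ) :
    ∫ z in t.cell ![i, j, k, l], f z.2.2 * g (z.1, z.2.1) ∂m.law =
      (∫ x, f x ∂t.part₃ k l) * ∫ q, g q ∂(t.part₁ i).prod (t.part₂ j) := by
  rw [restrict_cell, integral_prod_mul_last]

theorem setIntegral_cell_mul_real_cell (i j k l i' j' k' l' : Fin 2) (f : Λ₃ → ℝ)
    (g : Λ₁ × Λ₂ → ℝ) :
    (∫ z in t.cell ![i, j, k, l], f z.2.2 * g (z.1, z.2.1) ∂m.law) *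
        m.law.real (t.cell ![i', j', k', l']) =
      (∫ z in t.cell ![i', j', k, l], f z.2.2 ∂m.law) *
        ∫ z in t.cell ![i, j, k', l'], g (z.1, z.2.1) ∂m.law := by
  have hmass := t.setIntegral_cell_mul_last i' j' k' l' 1 1
  have hf := t.setIntegral_cell_mul_last i' j' k l f 1
  have hg := t.setIntegral_cell_mul_last i j k' l' 1 g
  simp only [Pi.one_apply, one_mul, mul_one, setIntegral_const, smul_eq_mul] at hmass hf hg
  rw [hmass, hf, hg, t.setIntegral_cell_mul_last]
  ring

/-- `A₂` and `A₄` share no source, so their responses factorize on every cell, and each factor also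
occurs on a cell with a nonconstant route. -/
theorem setIntegral_cell_zero_response_one_mul (hu : u ^ 2 ≤ 1) :
    ∫ z in t.cell ![0, 0, 0, 0], m.response 1 (.one 0) z * m.response 3 (.one 0) z ∂m.law =
      (1 - u ^ 2) ^ 2 / 16 := by
  have hmass := t.real_law_cell hu (r := ![1, 0, 0, 1]) (i := 0) (j := 1) (by decide)
  have hv : √(1 - u ^ 2) ^ 2 = 1 - u ^ 2 := Real.sq_sqrt (sub_nonneg.2 hu)
  have hone : ∫ z in t.cell ![0, 0, 0, 1], m.p₂ (.one 0) (z.1, z.2.1) ∂m.law =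
      (1 - u ^ 2) / 16 := by
    simpa [basisVec, leftToken, vco, hv, response] using
      t.setIntegral_cell hu (a := ![.zero, .one 0, .one 0, .two]) (r := ![0, 0, 0, 1])
        (i := 0) (j := 3) (by decide) (by decide) {1}
  have hthree : ∫ z in t.cell ![1, 0, 0, 0], m.p₄ (.one 0) z.2.2 ∂m.law = (1 - u ^ 2) / 16 := by
    simpa [basisVec, leftToken, vco, hv, response] using
      t.setIntegral_cell hu (a := ![.two, .zero, .one 0, .one 0]) (r := ![1, 0, 0, 0])
        (i := 0) (j := 1) (by decide) (by decide) {3}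
  have hswap := t.setIntegral_cell_mul_real_cell 0 0 0 0 1 0 0 1 (m.p₄ (.one 0)) (m.p₂ (.one 0))
  rw [hmass, hthree, hone] at hswap
  calc ∫ z in t.cell ![0, 0, 0, 0], m.p₂ (.one 0) (z.1, z.2.1) * m.p₄ (.one 0) z.2.2 ∂m.law
      = ∫ z in t.cell ![0, 0, 0, 0], m.p₄ (.one 0) z.2.2 * m.p₂ (.one 0) (z.1, z.2.1) ∂m.law := by
        simp only [mul_comm (m.p₂ _ _)]
    _ = (1 - u ^ 2) ^ 2 / 16 := by linarith

/-- Union bound: when `A₄` answers `1₀`, either the other parties all answer `1₁`, or one of them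
answers `1₀` as well. -/
theorem ae_response_three_le :
    ∀ᵐ z ∂m.law.restrict (t.cell ![0, 0, 0, 0]), m.response 3 (.one 0) z ≤
      ∏ k, m.response k (.one (![1, 1, 1, 0] k)) z +
        (m.response 0 (.one 0) z * m.response 3 (.one 0) z +
          m.response 1 (.one 0) z * m.response 3 (.one 0) z +
          m.response 2 (.one 0) z * m.response 3 (.one 0) z) := by
  rw [ae_restrict_iff' (t.measurableSet_cell _)]
  filter_upwards [t.ae_tok_eq] with z hz hcell
  rw [mem_cell_iff] at hcell
  have hsum (i : Fin 4) : m.response i (.one 0) z + m.response i (.one 1) z = 1 := by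
    have htok (o : Outc) (ho : m.response i o z ≠ 0) : o.tok = 1 := by
      rw [hz i o ho, hcell]
      clear * -
      decide +revert
    have hzero : m.response i .zero z = 0 := by_contra fun h => absurd (htok _ h) (by decide)
    have htwo : m.response i .two z = 0 := by_contra fun h => absurd (htok _ h) (by decide)
    simpa [Outc.sum_univ, hzero, htwo] using (m.isResponse_response i).sum_eq_one z
  have hnonneg (i : Fin 4) (o : Outc) := (m.isResponse_response i).nonneg o z
  have hunion := one_le_mul_one_sub_add (hnonneg 0 (.one 0)) (hnonneg 1 (.one 0))
    (hnonneg 2 (.one 0)) ((m.isResponse_response 0).le_one _ z)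
  have hone (i : Fin 4) : m.response i (.one 1) z = 1 - m.response i (.one 0) z :=
    eq_sub_of_add_eq' (hsum i)
  calc m.response 3 (.one 0) z
      ≤ ((1 - m.response 0 (.one 0) z) * (1 - m.response 1 (.one 0) z) *
            (1 - m.response 2 (.one 0) z) +
          (m.response 0 (.one 0) z + m.response 1 (.one 0) z + m.response 2 (.one 0) z)) *
          m.response 3 (.one 0) z := le_mul_of_one_le_left (hnonneg 3 _) hunion
    _ = _ := by simp only [Fin.prod_univ_four, Matrix.cons_val, hone]; ring

theorem setIntegral_cell_le_ringP (r : Fin 4 → Fin 2) (a : Fin 4 → Outc) :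
    ∫ z in t.cell r, ∏ i, m.response i (a i) z ∂m.law ≤ ringP 4 u a :=
  (setIntegral_le_integral (m.integrable_prod_response a .univ)
    (.of_forall (m.prod_response_nonneg a .univ))).trans_eq (m.ringP_eq_integral a).symm

theorem setIntegral_response_three_le :
    ∫ z in t.cell ![0, 0, 0, 0], m.response 3 (.one 0) z ∂m.law ≤
      ∫ z in t.cell ![0, 0, 0, 0], ∏ k, m.response k (.one (![1, 1, 1, 0] k)) z ∂m.law +
        (∫ z in t.cell ![0, 0, 0, 0], m.response 0 (.one 0) z * m.response 3 (.one 0) z ∂m.law +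
          ∫ z in t.cell ![0, 0, 0, 0], m.response 1 (.one 0) z * m.response 3 (.one 0) z ∂m.law +
          ∫ z in t.cell ![0, 0, 0, 0],
            m.response 2 (.one 0) z * m.response 3 (.one 0) z ∂m.law) := by
  have hpair (i : Fin 4) (hi : i ≠ 3) :
      IntegrableOn (fun z => m.response i (.one 0) z * m.response 3 (.one 0) z)
        (t.cell ![0, 0, 0, 0]) m.law := by
    simpa only [Finset.prod_pair hi] using
      (m.integrable_prod_response (fun _ => .one 0) {i, 3}).integrableOn
  have hall : IntegrableOn (fun z => ∏ k, m.response k (.one (![1, 1, 1, 0] k)) z)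
      (t.cell ![0, 0, 0, 0]) m.law :=
    (m.integrable_prod_response (fun k => .one (![1, 1, 1, 0] k)) .univ).integrableOn
  have hthree : IntegrableOn (m.response 3 (.one 0)) (t.cell ![0, 0, 0, 0]) m.law := by
    simpa only [Finset.prod_singleton] using
      (m.integrable_prod_response (fun _ => .one 0) {3}).integrableOn
  have h01 := (hpair 0 (by decide)).add (hpair 1 (by decide))
  have h012 := h01.add (hpair 2 (by decide))
  have hle := integral_mono_ae hthree (hall.add h012) t.ae_response_three_le
  rwa [integral_add' hall h012, integral_add' h01 (hpair 2 (by decide)),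
    integral_add' (hpair 0 (by decide)) (hpair 1 (by decide))] at hle

end Routing

theorem one_sub_sq_le (m : SquareModel u Λ₁ Λ₂ Λ₃) (hu : u ^ 2 ≤ 1) :
    1 - u ^ 2 ≤ u ^ 2 * (1 - u ^ 2) * (1 - 2 * u ^ 2) ^ 2 + 3 * (1 - u ^ 2) ^ 2 := by
  obtain ⟨t⟩ := m.nonempty_routing
  have hunion := t.setIntegral_response_three_le
  have hall := t.setIntegral_cell_le_ringP ![0, 0, 0, 0] fun k => .one (![1, 1, 1, 0] k)
  rw [ringP_four_one_one_one_zero hu] at hall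
  rw [t.setIntegral_cell_zero_response_three hu, t.setIntegral_cell_zero_response_zero_mul hu,
    t.setIntegral_cell_zero_response_one_mul hu,
    t.setIntegral_cell_zero_response_two_mul hu] at hunion
  linarith

end SquareModel

theorem stmt_1_general {u : ℝ} (hu : 1 / 2 < u ^ 4) (hu1 : u ^ 2 < 1) {Λ₁ Λ₂ Λ₃ : Type*}
    [MeasurableSpace Λ₁] [MeasurableSpace Λ₂] [MeasurableSpace Λ₃] :
    IsEmpty (SquareModel u Λ₁ Λ₂ Λ₃) := by
  refine ⟨fun m => ?_⟩
  have hgap : 1 - u ^ 2 - (u ^ 2 * (1 - u ^ 2) * (1 - 2 * u ^ 2) ^ 2 + 3 * (1 - u ^ 2) ^ 2) =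
      4 * (1 - u ^ 2) ^ 2 * (u ^ 4 - 1 / 2) := by ring
  have hpos := mul_pos (pow_pos (sub_pos.2 hu1) 2) (sub_pos.2 hu)
  linarith [m.one_sub_sq_le hu1.le, hgap]

/-- For every real `u` with `0.841 < u < 1`, the square-network quantum
distribution `P_Q^□` is nonlocal on the network with bipartite sources `S₁ (A₁,A₂)`,
`S₂ (A₂,A₃)` and a tripartite source `S₃ (A₁,A₃,A₄)`. -/
theorem stmt_1 (u : ℝ) (hu : (0.841 : ℝ) < u) (hu1 : u < 1) :
    ¬ ∃ (Λ₁ Λ₂ Λ₃ : Type)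
        (m₁ : MeasurableSpace Λ₁) (m₂ : MeasurableSpace Λ₂) (m₃ : MeasurableSpace Λ₃)
        (μ₁ : @Measure Λ₁ m₁) (μ₂ : @Measure Λ₂ m₂) (μ₃ : @Measure Λ₃ m₃)
        (p₁ : Outc → Λ₁ → Λ₃ → ℝ) (p₂ : Outc → Λ₁ → Λ₂ → ℝ)
        (p₃ : Outc → Λ₂ → Λ₃ → ℝ) (p₄ : Outc → Λ₃ → ℝ),
      IsProbabilityMeasure μ₁ ∧ IsProbabilityMeasure μ₂ ∧ IsProbabilityMeasure μ₃ ∧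
      (∀ a, @Measurable _ _ (m₁.prod m₃) _ fun q : Λ₁ × Λ₃ => p₁ a q.1 q.2) ∧
      (∀ a, @Measurable _ _ (m₁.prod m₂) _ fun q : Λ₁ × Λ₂ => p₂ a q.1 q.2) ∧
      (∀ a, @Measurable _ _ (m₂.prod m₃) _ fun q : Λ₂ × Λ₃ => p₃ a q.1 q.2) ∧
      (∀ a, @Measurable _ _ m₃ _ (p₄ a)) ∧
      (∀ x y, (∀ a, 0 ≤ p₁ a x y) ∧ ∑ a, p₁ a x y = 1) ∧
      (∀ x y, (∀ a, 0 ≤ p₂ a x y) ∧ ∑ a, p₂ a x y = 1) ∧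
      (∀ x y, (∀ a, 0 ≤ p₃ a x y) ∧ ∑ a, p₃ a x y = 1) ∧
      (∀ x, (∀ a, 0 ≤ p₄ a x) ∧ ∑ a, p₄ a x = 1) ∧
      (∀ a₁ a₂ a₃ a₄ : Outc,
        ringP 4 u ![a₁, a₂, a₃, a₄] =
          ∫ x₁, ∫ x₂, ∫ x₃,
            p₁ a₁ x₁ x₃ * p₂ a₂ x₁ x₂ * p₃ a₃ x₂ x₃ * p₄ a₄ x₃ ∂μ₃ ∂μ₂ ∂μ₁) := by
  rintro ⟨Λ₁, Λ₂, Λ₃, m₁, m₂, m₃, μ₁, μ₂, μ₃, p₁, p₂, p₃, p₄, _, _, _, hm₁, hm₂, hm₃, hm₄,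
    h₁, h₂, h₃, h₄, hP⟩
  have hu4 : 1 / 2 < u ^ 4 :=
    (by norm_num : (1 / 2 : ℝ) < 0.841 ^ 4).trans
      (pow_lt_pow_left₀ hu (by norm_num) (by norm_num))
  have hu2 : u ^ 2 < 1 := pow_lt_one₀ (by linarith) hu1 two_ne_zero
  exact (stmt_1_general hu4 hu2 (Λ₁ := Λ₁) (Λ₂ := Λ₂) (Λ₃ := Λ₃)).false {
    μ₁, μ₂, μ₃, p₄
    p₁ := fun o q => p₁ o q.1 q.2
    p₂ := fun o q => p₂ o q.1 q.2
    p₃ := fun o q => p₃ o q.1 q.2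
    isResponse₁ := ⟨hm₁, fun o q => (h₁ q.1 q.2).1 o, fun q => (h₁ q.1 q.2).2⟩
    isResponse₂ := ⟨hm₂, fun o q => (h₂ q.1 q.2).1 o, fun q => (h₂ q.1 q.2).2⟩
    isResponse₃ := ⟨hm₃, fun o q => (h₃ q.1 q.2).1 o, fun q => (h₃ q.1 q.2).2⟩
    isResponse₄ := ⟨hm₄, fun o z => (h₄ z).1 o, fun z => (h₄ z).2⟩
    ringP_eq := hP }
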